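/- arXiv:1904.06970 — 5 statements merged into one kernel-verified Lean document; each statement's English description precedes it below -/
import Mathlib

section
/- Let G be a finite group and B ≤ G a subgroup. Suppose given a finite index set W, for each w ∈ W a finite subset X_w ⊆ G and an element n_w ∈ G, such that the map ((w,v),b) ↦ v·n_w·b from (Σ_{w∈W} X_w) × B to G is a bijection. Then for every u ∈ G, the number of left cosets gB of B with u·gB = gB equals the sum over w ∈ W of the cardinalities |{v ∈ X_w : n_w⁻¹·v⁻¹·u·v·n_w ∈ B}|. -/
/-! The sharp decomposition says exactly that `(w, v) ↦ v * n w * B` is a bijection from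
`Σ w, X w` onto `G ⧸ B`: forgetting the factor `b ∈ B` amounts to passing to left cosets
(`bijective_mk_of_sharp`). Since `u` fixes `g * B` iff `g⁻¹ * u * g ∈ B` (`smul_mk_eq_iff`), this
bijection restricts to one between the pairs `(w, v)` with `(n w)⁻¹ * v⁻¹ * u * v * n w ∈ B` and
the fixed cosets, and counting the pairs fibrewise over `w` gives the formula. -/

/-- If every element of `G` factors uniquely as `f s * b` with `b ∈ B`, then `f` enumerates
representatives of the left cosets of `B` without repetition. -/
theorem bijective_mk_of_sharp {G S : Type*} [Group G] (B : Subgroup G) (f : S → G)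
    (h : Function.Bijective fun p : S × B => f p.1 * (p.2 : G)) :
    Function.Bijective fun s : S => (f s : G ⧸ B) := by
  constructor
  · intro s t hst
    have hb : (f s)⁻¹ * f t ∈ B := QuotientGroup.eq.mp hst
    have key : (s, (⟨(f s)⁻¹ * f t, hb⟩ : B)) = (t, 1) := h.1 (by simp)
    exact congrArg Prod.fst key
  · intro C
    obtain ⟨g, rfl⟩ := QuotientGroup.mk_surjective C
    obtain ⟨⟨s, b⟩, rfl⟩ := h.2 g
    exact ⟨s, QuotientGroup.eq.mpr (by simp)⟩

theorem smul_mk_eq_iff {G : Type*} [Group G] (B : Subgroup G) (u g : G) :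
    u • (g : G ⧸ B) = (g : G ⧸ B) ↔ g⁻¹ * u * g ∈ B := by
  rw [eq_comm, MulAction.Quotient.smul_coe, QuotientGroup.eq, smul_eq_mul, mul_assoc]

/-- Sharp-decomposition counting formula (Lemma 2.9): if `((w,v),b) ↦ v·n_w·b` is a
bijection from `(Σ_w X_w) × B` onto `G`, then for every `u ∈ G`, the number of left
cosets of `B` fixed by `u` is `Σ_w |{v ∈ X_w : n_w⁻¹ v⁻¹ u v n_w ∈ B}|`. -/
theorem stmt_4 (G : Type*) [Group G] [Fintype G] (B : Subgroup G)
    (W : Type*) [Fintype W] (X : W → Set G) (hX : ∀ w, (X w).Finite) (n : W → G)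
    (h : Function.Bijective fun p : (Σ w : W, X w) × B =>
      (p.1.2 : G) * n p.1.1 * (p.2 : G))
    (u : G) :
    Nat.card {C : G ⧸ B // u • C = C} =
      ∑ w : W, Nat.card {v : X w // (n w)⁻¹ * (v : G)⁻¹ * u * (v : G) * n w ∈ B} := by
  have hbij := bijective_mk_of_sharp B (fun s : Σ w : W, X w => (s.2 : G) * n s.1) h
  have (w : W) : Finite (X w) := hX w
  rw [← Nat.card_sigma]
  refine Nat.card_congr (Equiv.trans (Equiv.subtypeEquiv (Equiv.ofBijective _ hbij)
    (p := fun s : Σ w : W, X w =>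
      (n s.1)⁻¹ * (s.2 : G)⁻¹ * u * (s.2 : G) * n s.1 ∈ B) ?_).symm ?_)
  · intro s
    rw [Equiv.ofBijective_apply, smul_mk_eq_iff, mul_inv_rev, ← mul_assoc]
  · exact
      { toFun := fun s => ⟨s.1.1, s.1.2, s.2⟩
        invFun := fun s => ⟨⟨s.1, s.2.1⟩, s.2.2⟩
        left_inv := fun _ => rfl
        right_inv := fun _ => rfl }
end

section
/- Let G be a finite group and B ≤ G a subgroup. Suppose given a finite index set W, for each w ∈ W a finite subset X_w ⊆ G and an element n_w ∈ G, such that the map ((w,v),b) ↦ v·n_w·b from (Σ_{w∈W} X_w) × B to G is a bijection. Then for every u ∈ G and every subset W₀ ⊆ W, the partial sum Σ_{w ∈ W₀} |{v ∈ X_w : n_w⁻¹·v⁻¹·u·v·n_w ∈ B}| is at most the number of left cosets gB of B with u·gB = gB. -/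
/-!
The map `(w, v) ↦ v * n w * B` sends the pairs counted on the left to cosets of `B`. The condition
`(n w)⁻¹ * v⁻¹ * u * v * n w ∈ B` says exactly that the coset is fixed by `u`, and uniqueness of
the decomposition `v * n w * b` makes the map injective, so the sum, being the cardinality of a
sigma type, is bounded by the number of fixed cosets.
-/

/-- Lower-bound estimate (Remark 3.2): with a sharp decomposition of `G` as in Lemma 2.9,
any partial sum over a subset `W₀ ⊆ W` of the counts `|{v ∈ X_w : n_w⁻¹ v⁻¹ u v n_w ∈ B}|`
is at most the number of left cosets of `B` fixed by `u`. -/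
theorem stmt_5 (G : Type*) [Group G] [Fintype G] (B : Subgroup G)
    (W : Type*) [Fintype W] (X : W → Set G) (hX : ∀ w, (X w).Finite) (n : W → G)
    (h : Function.Bijective fun p : (Σ w : W, X w) × B =>
      (p.1.2 : G) * n p.1.1 * (p.2 : G))
    (u : G) (W₀ : Finset W) :
    ∑ w ∈ W₀, Nat.card {v : X w // (n w)⁻¹ * (v : G)⁻¹ * u * (v : G) * n w ∈ B} ≤
      Nat.card {C : G ⧸ B // u • C = C} := by
  have : ∀ w, Finite (X w) := fun w => (hX w).to_subtype
  let f : (Σ w : W₀, {v : X w // (n w)⁻¹ * (v : G)⁻¹ * u * (v : G) * n w ∈ B}) →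
      {C : G ⧸ B // u • C = C} := fun p =>
    ⟨(((p.2.1 : G) * n p.1 : G) : G ⧸ B), by
      rw [MulAction.Quotient.smul_coe, eq_comm, QuotientGroup.eq]
      simpa [mul_assoc] using p.2.2⟩
  have hf : Function.Injective f := by
    rintro ⟨⟨w, hw⟩, v, hv⟩ ⟨⟨w', hw'⟩, v', hv'⟩ hp
    have hB : ((v : G) * n w)⁻¹ * ((v' : G) * n w') ∈ B :=
      QuotientGroup.eq.mp (congrArg Subtype.val hp)
    -- Equal cosets: `v' * n w' * 1 = v * n w * b` with `b ∈ B`, two decompositions of one element.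
    have key := @h.1 (⟨w', v'⟩, 1) (⟨w, v⟩, ⟨_, hB⟩) (by simp [mul_assoc])
    obtain ⟨rfl, hv⟩ := Sigma.mk.inj (congrArg Prod.fst key)
    obtain rfl := eq_of_heq hv
    rfl
  calc
    _ = ∑ w : W₀, Nat.card {v : X w // (n w)⁻¹ * (v : G)⁻¹ * u * (v : G) * n w ∈ B} :=
      (Finset.sum_coe_sort W₀ fun w =>
        Nat.card {v : X w // (n w)⁻¹ * (v : G)⁻¹ * u * (v : G) * n w ∈ B}).symm
    _ = Nat.card (Σ w : W₀, {v : X w // (n w)⁻¹ * (v : G)⁻¹ * u * (v : G) * n w ∈ B}) :=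
      Nat.card_sigma.symm
    _ ≤ _ := Nat.card_le_card_of_injective f hf
end

section
/- Let W be a finite group, γ an automorphism of W, S a finite set, and for each w ∈ W let Q_w : S → ℚ be a function and θ(w) ∈ ℚ a scalar. Assume the orthogonality relations: for all w, w' ∈ W, Σ_{u ∈ S} Q_w(u)·Q_{w'}(u) = θ(w) · |{x ∈ W : x·w·γ(x)⁻¹ = w'}|. For any function f : W → ℚ define R_f : S → ℚ by R_f(u) = (1/|W|) Σ_{w ∈ W} f(w)·Q_w(u). Then for all functions f, f' : W → ℚ such that f(x·w·γ(x)⁻¹) = f(w) for all x, w ∈ W, one has Σ_{u ∈ S} R_{f'}(u)·R_f(u) = (1/|W|) Σ_{w ∈ W} θ(w)·f'(w)·f(w). -/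
/-!
Expanding the product of the two averages and summing over `u` first turns the left side into
`|W|⁻² Σ_w Σ_{w'} f' w * f w' * θ w * |{x : x w γ(x)⁻¹ = w'}|`. Summing over `w'` against the
fibre cardinalities is the same as summing `f (x w γ(x)⁻¹) = f w` over all `x`, which gives
`|W| * f w` and cancels one factor `|W|⁻¹`.
-/

/-- Summing `f` against the fibre cardinalities of a map `g` amounts to summing `f ∘ g`. -/
theorem sum_mul_card_fiber {X Y : Type*} [Fintype X] [Fintype Y] (g : X → Y) (f : Y → ℚ) :
    ∑ y : Y, f y * (Nat.card {x : X // g x = y} : ℚ) = ∑ x : X, f (g x) := by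
  classical
  rw [← Finset.sum_fiberwise Finset.univ g (fun x => f (g x))]
  refine Finset.sum_congr rfl fun y _ => ?_
  rw [Finset.sum_congr rfl (g := fun _ => f y)
    (fun x hx => by rw [(Finset.mem_filter.mp hx).2])]
  rw [Finset.sum_const, Nat.card_eq_fintype_card, Fintype.card_subtype, nsmul_eq_mul, mul_comm]

/-- Orthogonality relations for almost characters (Proposition 2.2), in abstract form:
if the `Q_w` satisfy `Σ_u Q_w(u) Q_{w'}(u) = θ(w)·|{x : x w γ(x)⁻¹ = w'}|`, then for
`γ`-twisted class functions `f, f'` the functions `R_f(u) = |W|⁻¹ Σ_w f(w) Q_w(u)` satisfy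
`Σ_u R_{f'}(u) R_f(u) = |W|⁻¹ Σ_w θ(w) f'(w) f(w)`. -/
theorem stmt_8 (W : Type*) [Group W] [Fintype W] (γ : W ≃* W)
    (S : Type*) [Fintype S] (Q : W → S → ℚ) (θ : W → ℚ)
    (horth : ∀ w w' : W, ∑ u : S, Q w u * Q w' u =
      θ w * (Nat.card {x : W // x * w * (γ x)⁻¹ = w'} : ℚ))
    (f f' : W → ℚ)
    (hf : ∀ x w : W, f (x * w * (γ x)⁻¹) = f w)
    (hf' : ∀ x w : W, f' (x * w * (γ x)⁻¹) = f' w) :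
    ∑ u : S, ((1 / (Nat.card W : ℚ)) * ∑ w : W, f' w * Q w u) *
        ((1 / (Nat.card W : ℚ)) * ∑ w : W, f w * Q w u) =
      (1 / (Nat.card W : ℚ)) * ∑ w : W, θ w * f' w * f w := by
  have hN : (Nat.card W : ℚ) ≠ 0 := Nat.cast_ne_zero.mpr Nat.card_pos.ne'
  have key : ∀ w : W, ∑ w' : W, f w' * (Nat.card {x : W // x * w * (γ x)⁻¹ = w'} : ℚ) =
      (Nat.card W : ℚ) * f w := fun w => by
    rw [sum_mul_card_fiber (fun x => x * w * (γ x)⁻¹) f]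
    simp [hf]
  have expand : ∑ u : S, (∑ w : W, f' w * Q w u) * (∑ w : W, f w * Q w u) =
      ∑ w : W, ∑ w' : W, f' w * f w' * ∑ u : S, Q w u * Q w' u := by
    simp_rw [Finset.sum_mul_sum, Finset.mul_sum]
    rw [Finset.sum_comm]
    refine Finset.sum_congr rfl fun w _ => ?_
    rw [Finset.sum_comm]
    refine Finset.sum_congr rfl fun w' _ => Finset.sum_congr rfl fun u _ => ?_
    ring
  have inner_sum : ∀ w : W, ∑ w' : W, f' w * f w' * ∑ u : S, Q w u * Q w' u =
      (Nat.card W : ℚ) * (θ w * f' w * f w) := fun w => by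
    calc _ = θ w * f' w *
          ∑ w' : W, f w' * (Nat.card {x : W // x * w * (γ x)⁻¹ = w'} : ℚ) := by
          rw [Finset.mul_sum]
          refine Finset.sum_congr rfl fun w' _ => ?_
          rw [horth]
          ring
      _ = _ := by
          rw [key]
          ring
  simp only [mul_mul_mul_comm (1 / (Nat.card W : ℚ))]
  rw [← Finset.mul_sum, expand, Finset.sum_congr rfl fun w _ => inner_sum w, ← Finset.mul_sum]
  field_simp
end

section
/- Let I be a finite index set, d : I → ℤ a function, and ≈ an equivalence relation on I such that i ≈ j implies d(i) = d(j). Let P, P', Λ, Λ' be I × I matrices over ℚ satisfying: (i) P(i,i) = 1 and P'(i,i) = 1 for all i; (ii) P(i,j) = 0 and P'(i,j) = 0 whenever i ≠ j and d(i) ≥ d(j); (iii) Λ(i,j) = 0 and Λ'(i,j) = 0 whenever i is not equivalent to j; (iv) for each equivalence class c ⊆ I, the submatrices of Λ and of Λ' with rows and columns indexed by c are invertible. If Pᵀ·Λ·P = P'ᵀ·Λ'·P', then P = P' and Λ = Λ'. -/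
/-!
The equation is a block `LDU` factorisation for the blocks given by the fibres of `d`, and the proof
is the usual uniqueness argument. Both `P` and `P'` are block upper triangular with identity
diagonal blocks, hence invertible with inverses of the same shape (`UniTri.inv`). The equation
`Pᵀ L P = P'ᵀ L' P'` becomes `L (P P'⁻¹) = (P' P⁻¹)ᵀ L'`. The left side is block upper triangular and
the right side block lower triangular, so both are block diagonal, and the diagonal blocks of the
left side are those of `L`. Hence `L (P P'⁻¹) = L`. As `L` is block diagonal with invertible
blocks it can be cancelled (`mulVec_eq_zero_of_blocks`), giving `P = P'`, and then `L = L'`.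
-/

open Matrix

/-- `M` is block upper triangular for the fibres of `d`, with identity diagonal blocks. -/
def UniTri {I : Type*} [DecidableEq I] (d : I → ℤ) (M : Matrix I I ℚ) : Prop :=
  M.BlockTriangular d ∧ ∀ i j, d i = d j → M i j = (1 : Matrix I I ℚ) i j

theorem uniTri_of {I : Type*} [DecidableEq I] {d : I → ℤ} {P : Matrix I I ℚ}
    (h1 : ∀ i, P i i = 1) (h0 : ∀ i j, i ≠ j → d i ≥ d j → P i j = 0) : UniTri d P := by
  refine ⟨fun i j h => h0 i j ?_ h.le, fun i j h => ?_⟩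
  · rintro rfl
    exact lt_irrefl _ h
  · by_cases hij : i = j
    · subst hij
      simp [h1]
    · rw [h0 i j hij h.ge, Matrix.one_apply_ne hij]

/-- Right multiplication by a `UniTri` matrix does not change the diagonal blocks of a block
triangular matrix. -/
theorem UniTri.mul_apply {I : Type*} [Fintype I] [DecidableEq I] {d : I → ℤ}
    {M N : Matrix I I ℚ} (hM : M.BlockTriangular d) (hN : UniTri d N) {i j : I}
    (hij : d i = d j) : (M * N) i j = M i j := by
  rw [Matrix.mul_apply, Finset.sum_eq_single j]
  · rw [hN.2 j j rfl, Matrix.one_apply_eq, mul_one]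
  · intro k _ hk
    rcases lt_trichotomy (d k) (d j) with h | h | h
    · rw [hM (hij ▸ h), zero_mul]
    · rw [hN.2 k j h, Matrix.one_apply_ne hk, mul_zero]
    · rw [hN.1 h, mul_zero]
  · simp

theorem UniTri.det {I : Type*} [Fintype I] [DecidableEq I] {d : I → ℤ}
    {M : Matrix I I ℚ} (hM : UniTri d M) : M.det = 1 := by
  rw [hM.1.det]
  refine Finset.prod_eq_one fun a _ => ?_
  have : M.toSquareBlock d a = 1 := by
    ext ⟨i, hi⟩ ⟨j, hj⟩
    simp [Matrix.toSquareBlock_def, hM.2 i j (hi.trans hj.symm), Matrix.one_apply]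
  rw [this, Matrix.det_one]

theorem UniTri.isUnit_det {I : Type*} [Fintype I] [DecidableEq I] {d : I → ℤ}
    {M : Matrix I I ℚ} (hM : UniTri d M) : IsUnit M.det := by
  rw [hM.det]
  exact isUnit_one

theorem UniTri.inv {I : Type*} [Fintype I] [DecidableEq I] {d : I → ℤ}
    {M : Matrix I I ℚ} (hM : UniTri d M) : UniTri d M⁻¹ := by
  have : Invertible M := M.invertibleOfIsUnitDet hM.isUnit_det
  have hb : M⁻¹.BlockTriangular d := blockTriangular_inv_of_blockTriangular hM.1
  refine ⟨hb, fun i j hij => ?_⟩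
  rw [← UniTri.mul_apply hb hM hij, Matrix.nonsing_inv_mul _ hM.isUnit_det]

/-- A block diagonal matrix with invertible diagonal blocks has trivial kernel. -/
theorem mulVec_eq_zero_of_blocks {I : Type*} [Fintype I] [DecidableEq I] {r : I → I → Prop}
    [∀ i j, Decidable (r i j)] (hr : Equivalence r) {L : Matrix I I ℚ}
    (hL0 : ∀ i j, ¬ r i j → L i j = 0)
    (hLinv : ∀ i, IsUnit (L.submatrix
      (fun x : {j // r i j} => (x : I)) (fun x : {j // r i j} => (x : I))))
    {v : I → ℚ} (hv : L *ᵥ v = 0) : v = 0 := by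
  funext i
  have key : (L.submatrix (fun x : {j // r i j} => (x : I)) (fun x : {j // r i j} => (x : I))) *ᵥ
      (fun x : {j // r i j} => v x) = 0 := by
    funext ⟨a, ha⟩
    have h := congrFun hv a
    simp only [Matrix.mulVec, dotProduct, Pi.zero_apply, Matrix.submatrix_apply] at h ⊢
    rw [← h, ← Finset.sum_subtype (Finset.univ.filter fun j => r i j) (by simp)
      (fun j => L a j * v j)]
    refine Finset.sum_subset (Finset.subset_univ _) fun j _ hj => ?_
    rw [hL0 a j fun haj => hj (by simpa using hr.trans ha haj), zero_mul]
  have h := Matrix.mulVec_injective_of_isUnit (hLinv i) (key.trans (Matrix.mulVec_zero _).symm)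
  exact congrFun h ⟨i, hr.refl i⟩


open Matrix in
/-- Uniqueness in the Lusztig–Shoji algorithm (Remark 2.5): the matrix equation
`Pᵀ Λ P = Ω` with `P` unitriangular with respect to `d` and `Λ` block-diagonal with
respect to an equivalence relation refining the fibres of `d`, with invertible diagonal
blocks, has at most one solution `(P, Λ)`. -/
theorem stmt_9 (I : Type*) [Fintype I] [DecidableEq I]
    (d : I → ℤ) (r : I → I → Prop) [∀ i j, Decidable (r i j)]
    (hr : Equivalence r) (hd : ∀ i j, r i j → d i = d j)
    (P P' L L' : Matrix I I ℚ)
    (hP1 : ∀ i, P i i = 1) (hP'1 : ∀ i, P' i i = 1)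
    (hP0 : ∀ i j, i ≠ j → d i ≥ d j → P i j = 0)
    (hP'0 : ∀ i j, i ≠ j → d i ≥ d j → P' i j = 0)
    (hL0 : ∀ i j, ¬ r i j → L i j = 0)
    (hL'0 : ∀ i j, ¬ r i j → L' i j = 0)
    (hLinv : ∀ i, IsUnit (L.submatrix
      (fun x : {j // r i j} => (x : I)) (fun x : {j // r i j} => (x : I))))
    (hL'inv : ∀ i, IsUnit (L'.submatrix
      (fun x : {j // r i j} => (x : I)) (fun x : {j // r i j} => (x : I))))
    (heq : Pᵀ * L * P = P'ᵀ * L' * P') :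
    P = P' ∧ L = L' := by
  have hP := uniTri_of hP1 hP0
  have hP' := uniTri_of hP'1 hP'0
  have uP := hP.isUnit_det
  have uP' := hP'.isUnit_det
  have hL : L.BlockTriangular d := fun i j h => hL0 i j fun hij => h.ne' (hd i j hij)
  have hL't : L'ᵀ.BlockTriangular d := fun i j h => hL'0 j i fun hij => h.ne (hd j i hij)
  have e : L * P * P'⁻¹ = (L'ᵀ * (P' * P⁻¹))ᵀ := by
    have uPt : IsUnit Pᵀ.det := by rwa [Matrix.det_transpose]
    calc L * P * P'⁻¹ = (Pᵀ)⁻¹ * (Pᵀ * L * P) * P'⁻¹ := by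
          rw [Matrix.mul_assoc Pᵀ, Matrix.nonsing_inv_mul_cancel_left _ _ uPt]
      _ = (Pᵀ)⁻¹ * (P'ᵀ * L') := by
          rw [heq, ← Matrix.mul_assoc, Matrix.mul_nonsing_inv_cancel_right _ _ uP']
      _ = _ := by
          simp only [Matrix.transpose_mul, Matrix.transpose_transpose,
            Matrix.transpose_nonsing_inv, Matrix.mul_assoc]
  have hLP : (L * P).BlockTriangular d := hL.mul hP.1
  have e2 : L * P * P'⁻¹ = L := by
    ext i j
    rcases lt_trichotomy (d i) (d j) with h | h | h
    · rw [e, Matrix.transpose_apply, (hL't.mul (hP'.1.mul hP.inv.1)) h]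
      exact (hL0 i j fun hij => h.ne (hd i j hij)).symm
    · rw [UniTri.mul_apply hLP hP'.inv h, UniTri.mul_apply hL hP h]
    · rw [(hLP.mul hP'.inv.1) h, hL h]
  have e3 : L * (P - P') = 0 := by
    rw [Matrix.mul_sub, sub_eq_zero]
    conv_rhs => rw [← e2]
    rw [Matrix.nonsing_inv_mul_cancel_right _ _ uP']
  have hPP : P = P' := by
    ext i j
    have hc : L *ᵥ (P - P').col j = 0 := by
      funext a
      exact congrFun (congrFun e3 a) j
    exact sub_eq_zero.mp (congrFun (mulVec_eq_zero_of_blocks hr hL0 hLinv hc) i)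
  subst hPP
  refine ⟨rfl, ?_⟩
  have e4 : L = (L'ᵀ * (P * P⁻¹))ᵀ := e2.symm.trans e
  rwa [Matrix.mul_nonsing_inv _ uP, Matrix.mul_one, Matrix.transpose_transpose] at e4
end

section
/- In the Coxeter group W of type E₆, consider the set of elements w with ℓ(w) ≤ 12 such that ℓ(w·s_i) > ℓ(w) for every i ∈ {1, 3, 4, 5, 6} (Bourbaki labelling; equivalently, w maps the simple roots α₁, α₃, α₄, α₅, α₆ to positive roots). This set has exactly 47 elements, and the sum Σ 3^{ℓ(w)} over this set equals 4220491. -/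
/-!
Let `J` be the set of nodes of `E₆` other than the branch node, and `θ` the highest root. The
simple reflections in `J` fix `θ`, and the orbit of `θ` consists of all 72 roots. The elements in
question are the `J`-minimal ones (those `w` with `ℓ(w sᵢ) > ℓ(w)` for all `i ∈ J`), and the theorem
follows from the claim that `w ↦ w θ` is a bijection from the `J`-minimal elements to the roots,
with `ℓ(w) = depth (w θ)`: it then suffices to count the roots of each depth at most 12.

Here `depth β` is an explicit function of the height of `β`. A simple reflection fixes a root or
changes its depth by exactly one, and `θ` is the only root of depth 0; hence `depth (w θ) ≤ ℓ(w)`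
(`depth_le_len`). Call `w` *reached at* `β` (`Reach w β`) if `w` is a product of simple reflections
that carry `θ` to `β`, each increasing the depth. Then `w θ = β` and `ℓ(w) = depth β`, and every root
has an element reached at it. Two inductions on the depth, each of which only involves two simple
reflections at a time, give:

* `Reach.unique`: only one element is reached at `β`. If the leftmost letters of two such elements
  differ, both elements can be rewritten to go through the bottom of the square or hexagon below
  `β`, and then they differ by a commutation or braid relation.
* `Reach.flat`: if `w` is reached at `β` and `sⱼ` fixes `β`, then `sⱼ w = w sᵢ` for some `i ∈ J`.

Reached elements are `J`-minimal, since `w sᵢ` also maps `θ` to `β` and so has length at least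
`depth β = ℓ(w)`, while `ℓ(w sᵢ) ≠ ℓ(w)` by parity. Conversely (`JMin.reach`), a `J`-minimal `w ≠ 1`
is `sⱼ v` with `v` shorter and again `J`-minimal, so `v` is reached at `v θ`; if `sⱼ` fixed `v θ`,
then `w = v sᵢ` would have a right descent in `J`.

The needed facts on the root system are finite checks over the 72 roots. Neither the exchange
condition nor the faithfulness of the reflection representation is used.
-/

namespace E6Roots

open CoxeterMatrix

/-! ### The action on the root lattice -/

/-- The Coxeter group of type `E₆`. -/
abbrev W : Type := E₆.Group

/-- The simple reflections of `W`. -/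
abbrev s (j : Fin 6) : W := E₆.toCoxeterSystem.simple j

/-- The length function of `W`. -/
noncomputable abbrev len (w : W) : ℕ := E₆.toCoxeterSystem.length w

/-- The five nodes other than the branch node; they span a subdiagram of type `A₅`. -/
abbrev J : Finset (Fin 6) := {0, 2, 3, 4, 5}

/-- The defining condition of a minimal-length representative of a coset in `W / W_J`. -/
def JMin (w : W) : Prop := ∀ i ∈ J, len w < len (w * s i)

/-- The Coxeter matrix of type `E₆`, as a function. -/
def m (j k : Fin 6) : ℕ := E₆ j k

/-- Elements of the root lattice: `cᵢ` is the coefficient of the simple root `αᵢ`, in Bourbaki's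
labelling (so that `cᵢ` belongs to the node `i - 1` of `Fin 6`). -/
structure V where
  (c₁ c₂ c₃ c₄ c₅ c₆ : ℤ)
  deriving DecidableEq

/-- The simple reflection `β ↦ β - ⟨β, αⱼ^∨⟩ αⱼ` of the root lattice: it replaces the coefficient of
`αⱼ` by the sum of the coefficients at the neighbours of `j`, minus the old one. -/
def refl (j : Fin 6) (β : V) : V :=
  match j with
  | 0 => { β with c₁ := β.c₃ - β.c₁ }
  | 1 => { β with c₂ := β.c₄ - β.c₂ }
  | 2 => { β with c₃ := β.c₁ + β.c₄ - β.c₃ }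
  | 3 => { β with c₄ := β.c₂ + β.c₃ + β.c₅ - β.c₄ }
  | 4 => { β with c₅ := β.c₄ + β.c₆ - β.c₅ }
  | 5 => { β with c₆ := β.c₅ - β.c₆ }

/-- The height of an element of the root lattice. -/
def height (β : V) : ℤ := β.c₁ + β.c₂ + β.c₃ + β.c₄ + β.c₅ + β.c₆

/-- The 36 positive roots, by increasing height. -/
def posRoots : List V := [
  ⟨1, 0, 0, 0, 0, 0⟩, ⟨0, 1, 0, 0, 0, 0⟩, ⟨0, 0, 1, 0, 0, 0⟩, ⟨0, 0, 0, 1, 0, 0⟩,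
  ⟨0, 0, 0, 0, 1, 0⟩, ⟨0, 0, 0, 0, 0, 1⟩, ⟨1, 0, 1, 0, 0, 0⟩, ⟨0, 1, 0, 1, 0, 0⟩,
  ⟨0, 0, 1, 1, 0, 0⟩, ⟨0, 0, 0, 1, 1, 0⟩, ⟨0, 0, 0, 0, 1, 1⟩, ⟨1, 0, 1, 1, 0, 0⟩,
  ⟨0, 1, 1, 1, 0, 0⟩, ⟨0, 1, 0, 1, 1, 0⟩, ⟨0, 0, 1, 1, 1, 0⟩, ⟨0, 0, 0, 1, 1, 1⟩,
  ⟨1, 1, 1, 1, 0, 0⟩, ⟨1, 0, 1, 1, 1, 0⟩, ⟨0, 1, 1, 1, 1, 0⟩, ⟨0, 1, 0, 1, 1, 1⟩,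
  ⟨0, 0, 1, 1, 1, 1⟩, ⟨1, 1, 1, 1, 1, 0⟩, ⟨1, 0, 1, 1, 1, 1⟩, ⟨0, 1, 1, 2, 1, 0⟩,
  ⟨0, 1, 1, 1, 1, 1⟩, ⟨1, 1, 1, 2, 1, 0⟩, ⟨1, 1, 1, 1, 1, 1⟩, ⟨0, 1, 1, 2, 1, 1⟩,
  ⟨1, 1, 2, 2, 1, 0⟩, ⟨1, 1, 1, 2, 1, 1⟩, ⟨0, 1, 1, 2, 2, 1⟩, ⟨1, 1, 2, 2, 1, 1⟩,
  ⟨1, 1, 1, 2, 2, 1⟩, ⟨1, 1, 2, 2, 2, 1⟩, ⟨1, 1, 2, 3, 2, 1⟩, ⟨1, 2, 2, 3, 2, 1⟩]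

/-- The 72 roots. -/
def roots : List V := posRoots ++ posRoots.map (fun β => ⟨-β.c₁, -β.c₂, -β.c₃, -β.c₄, -β.c₅, -β.c₆⟩)

/-- The highest root; it is also the fundamental weight of the branch node. -/
def θ : V := ⟨1, 2, 2, 3, 2, 1⟩

/-- The number of simple reflections needed to bring `θ`, of height 11, to the root `β`. On a shortest
path each of them lowers the height by one, except that the step from `αⱼ` to `-αⱼ` lowers it by two;
hence the correction for negative roots. -/
def depth (β : V) : ℕ :=
  if 0 < height β then (11 - height β).toNat else (10 - height β).toNat

/-- `refl` with values in the monoid of self-maps under composition. -/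
def reflEnd : Fin 6 → Function.End V := refl

theorem refl_refl (j : Fin 6) (β : V) : refl j (refl j β) = β := by
  fin_cases j <;> simp [refl]

theorem refl_comm (j k : Fin 6) (h : m j k = 2) (β : V) :
    refl j (refl k β) = refl k (refl j β) := by
  fin_cases j <;> fin_cases k <;> first
    | (exfalso; revert h; decide)
    | rfl

theorem refl_braid (j k : Fin 6) (h : m j k = 3) (β : V) :
    refl j (refl k (refl j β)) = refl k (refl j (refl k β)) := by
  fin_cases j <;> fin_cases k <;> first
    | (exfalso; revert h; decide)
    | (simp only [refl, V.mk.injEq]; ring_nf; simp)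

theorem coxeter_cases : ∀ j k, (j = k ∧ m j k = 1) ∨ m j k = 2 ∨ m j k = 3 := by decide +kernel

theorem coxeter_symm : ∀ j k, m j k = m k j := by decide +kernel

/-- The simple reflections of the root lattice satisfy the Coxeter relations. -/
theorem isLiftable_reflEnd : E₆.IsLiftable reflEnd := by
  intro j k
  change (reflEnd j * reflEnd k) ^ m j k = 1
  funext β
  rcases coxeter_cases j k with ⟨rfl, h⟩ | h | h
  · rw [h, pow_one]
    exact refl_refl j β
  · rw [h, pow_two]
    change refl j (refl k (refl j (refl k β))) = β
    rw [refl_comm j k h, refl_refl, refl_refl]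
  · rw [h, pow_succ, pow_two]
    change refl j (refl k (refl j (refl k (refl j (refl k β))))) = β
    rw [refl_braid j k h, refl_refl, refl_refl, refl_refl]

/-- The action of `W` on the root lattice. -/
def act : W →* Function.End V := E₆.toCoxeterSystem.lift ⟨reflEnd, isLiftable_reflEnd⟩

theorem act_simple (j : Fin 6) : act (s j) = reflEnd j :=
  E₆.toCoxeterSystem.lift_apply_simple isLiftable_reflEnd j

theorem act_one (β : V) : act 1 β = β := by rw [map_one]; rfl

theorem act_simple_mul (j : Fin 6) (w : W) (β : V) : act (s j * w) β = refl j (act w β) := by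
  rw [map_mul, act_simple]
  rfl

theorem act_mul_simple (w : W) (j : Fin 6) (β : V) : act (w * s j) β = act w (refl j β) := by
  rw [map_mul, act_simple]
  rfl

/-! ### Finite checks in the root system -/

theorem θ_mem : θ ∈ roots := by decide +kernel

theorem refl_mem : ∀ β ∈ roots, ∀ j, refl j β ∈ roots := by decide +kernel

theorem depth_refl : ∀ β ∈ roots, ∀ j, depth (refl j β) = depth β + 1 ∨
    depth (refl j β) + 1 = depth β ∨ refl j β = β := by decide +kernel

theorem depth_θ : depth θ = 0 := by decide +kernel

/-- Every root other than `θ` is brought closer to `θ` by some simple reflection. -/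
theorem exists_down : ∀ β ∈ roots, β ≠ θ → ∃ j, depth (refl j β) + 1 = depth β := by
  decide +kernel

theorem eq_of_depth_zero : ∀ β ∈ roots, depth β = 0 → β = θ := by decide +kernel

theorem refl_θ : ∀ j ∈ J, refl j θ = θ := by decide +kernel

theorem mem_J_of_refl_θ : ∀ j, refl j θ = θ → j ∈ J := by decide +kernel

/-- A root lowered by two commuting reflections is the top of a square. -/
theorem square : ∀ j k, m j k = 2 → ∀ β ∈ roots,
    depth (refl j β) + 1 = depth β → depth (refl k β) + 1 = depth β →
    depth (refl k (refl j β)) + 1 = depth (refl j β) ∧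
    refl j (refl k β) = refl k (refl j β) := by decide +kernel

/-- A root lowered by two reflections with a braid relation is the top of a hexagon. -/
theorem hexagon : ∀ j k, m j k = 3 → ∀ β ∈ roots,
    depth (refl j β) + 1 = depth β → depth (refl k β) + 1 = depth β →
    depth (refl k (refl j β)) + 1 = depth (refl j β) ∧
    depth (refl j (refl k (refl j β))) + 1 = depth (refl k (refl j β)) ∧
    refl j (refl k (refl j β)) = refl k (refl j (refl k β)) := by decide +kernel

/-- If `sⱼ` fixes `β` and commutes with `sₖ`, then it also fixes `sₖ β`. -/
theorem flat_two : ∀ j k, m j k = 2 → ∀ β ∈ roots, refl j β = β →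
    depth (refl k β) + 1 = depth β → refl j (refl k β) = refl k β := by decide +kernel

/-- If `sⱼ` fixes `β`, the nodes `j`, `k` are joined and `sₖ` lowers `β`, then `β` is the top of a
chain `β`, `sₖ β`, `sⱼ sₖ β`, whose bottom is fixed by `sₖ`. -/
theorem flat_three : ∀ j k, m j k = 3 → ∀ β ∈ roots, refl j β = β →
    depth (refl k β) + 1 = depth β →
    depth (refl j (refl k β)) + 1 = depth (refl k β) ∧
    refl k (refl j (refl k β)) = refl j (refl k β) := by decide +kernel

theorem card_roots : (roots.toFinset.filter (fun β => depth β ≤ 12)).card = 47 := by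
  decide +kernel

theorem sum_roots : ∑ β ∈ roots.toFinset.filter (fun β => depth β ≤ 12), 3 ^ depth β = 4220491 := by
  decide +kernel

/-! ### Relations and the length bound in `W` -/

theorem simple_comm {j k : Fin 6} (h : m j k = 2) (w : W) : s j * (s k * w) = s k * (s j * w) := by
  have h1 : (s j * s k) ^ m j k = 1 := E₆.toCoxeterSystem.simple_mul_simple_pow j k
  rw [h, pow_two, mul_eq_one_iff_eq_inv, mul_inv_rev, CoxeterSystem.inv_simple,
    CoxeterSystem.inv_simple] at h1
  rw [← mul_assoc, h1, mul_assoc]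

theorem simple_braid {j k : Fin 6} (h : m j k = 3) (w : W) :
    s j * (s k * (s j * w)) = s k * (s j * (s k * w)) := by
  have h1 : (s j * s k) ^ m j k = 1 := E₆.toCoxeterSystem.simple_mul_simple_pow j k
  have h2 : (s j * s k * s j) * (s k * s j * s k) = 1 := by
    rw [h, pow_succ, pow_two] at h1
    simpa only [mul_assoc] using h1
  rw [mul_eq_one_iff_eq_inv] at h2
  simp only [mul_inv_rev, CoxeterSystem.inv_simple] at h2
  simpa only [mul_assoc] using congrArg (· * w) h2

theorem act_mem (w : W) : act w θ ∈ roots := by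
  induction w using E₆.toCoxeterSystem.simple_induction_left with
  | one => rw [act_one]; exact θ_mem
  | mul_simple_left w j ih => rw [act_simple_mul]; exact refl_mem _ ih j

theorem depth_le_len (w : W) : depth (act w θ) ≤ len w := by
  obtain ⟨ω, hω, rfl⟩ := E₆.toCoxeterSystem.exists_isReduced w
  rw [len, hω.eq]
  clear hω
  induction ω with
  | nil => rw [CoxeterSystem.wordProd_nil, act_one, depth_θ]; simp
  | cons j ω ih =>
    rw [CoxeterSystem.wordProd_cons, act_simple_mul, List.length_cons]
    rcases depth_refl _ (act_mem (E₆.toCoxeterSystem.wordProd ω)) j with h | h | h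
    · lia
    · lia
    · rw [h]; lia

/-! ### Shortest paths from the highest root -/

/-- `Reach w β` means that `w` is a product of simple reflections which, applied in turn, carry `θ` to
`β` along roots of strictly increasing depth. -/
inductive Reach : W → V → Prop
  | base : Reach 1 θ
  | step {w : W} {β : V} (j : Fin 6) : Reach w β → depth (refl j β) = depth β + 1 →
      Reach (s j * w) (refl j β)

theorem Reach.act_eq {w : W} {β : V} (h : Reach w β) : act w θ = β := by
  induction h with
  | base => exact act_one θ
  | step j _ _ ih => rw [act_simple_mul, ih]

theorem Reach.mem {w : W} {β : V} (h : Reach w β) : β ∈ roots := h.act_eq ▸ act_mem w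

/-- The word built up along the path has `depth β` letters, and `depth_le_len` shows that no shorter
one exists. -/
theorem Reach.len_eq {w : W} {β : V} (h : Reach w β) : len w = depth β := by
  apply le_antisymm
  · induction h with
    | base => simp
    | @step w β j _ hd ih =>
      have := E₆.toCoxeterSystem.length_mul_le (s j) w
      rw [E₆.toCoxeterSystem.length_simple] at this
      lia
  · exact h.act_eq ▸ depth_le_len w

/-- The constructor `Reach.step`, stated in terms of the upper root. -/
theorem Reach.up {w : W} {β : V} (j : Fin 6) (h : Reach w (refl j β))
    (hd : depth (refl j β) + 1 = depth β) : Reach (s j * w) β := by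
  have h2 := refl_refl j β
  have := Reach.step j h (by rw [h2, hd])
  rwa [h2] at this

theorem exists_reach (β : V) (hβ : β ∈ roots) : ∃ w, Reach w β := by
  induction hn : depth β using Nat.strong_induction_on generalizing β with
  | _ n ih =>
    by_cases h0 : β = θ
    · exact ⟨1, h0 ▸ .base⟩
    · obtain ⟨j, hj⟩ := exists_down β hβ h0
      obtain ⟨w, hw⟩ := ih _ (by lia) (refl j β) (refl_mem β hβ j) rfl
      exact ⟨_, hw.up j hj⟩

theorem Reach.cases_down {w : W} {β : V} (h : Reach w β) : (w = 1 ∧ β = θ) ∨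
    ∃ j v, w = s j * v ∧ Reach v (refl j β) ∧ depth (refl j β) + 1 = depth β := by
  cases h with
  | base => exact .inl ⟨rfl, rfl⟩
  | @step v γ j hv hd =>
    refine .inr ⟨j, v, rfl, ?_⟩
    rw [refl_refl j γ]
    exact ⟨hv, hd.symm⟩

/-- At most one element is reached at each root: two elements with different last steps both factor
through an element reached at the bottom of the square or hexagon below `β`. -/
theorem Reach.unique {w w' : W} {β : V} (h : Reach w β) (h' : Reach w' β) : w = w' := by
  induction hn : depth β using Nat.strong_induction_on generalizing β w w' with
  | _ n ih =>
    have hβ := h.mem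
    rcases h.cases_down with ⟨rfl, rfl⟩ | ⟨j, v, rfl, hv, hj⟩
    · rcases h'.cases_down with ⟨rfl, -⟩ | ⟨k, v', rfl, hv', hk⟩
      · rfl
      · rw [depth_θ] at hk; lia
    rcases h'.cases_down with ⟨rfl, rfl⟩ | ⟨k, v', rfl, hv', hk⟩
    · rw [depth_θ] at hj; lia
    have hjm := hv.mem
    have hkm := hv'.mem
    rcases coxeter_cases j k with ⟨rfl, -⟩ | hjk | hjk
    · rw [ih _ (by lia) hv hv' rfl]
    · obtain ⟨h1, e⟩ := square j k hjk β hβ hj hk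
      obtain ⟨h2, -⟩ := square k j (by rwa [coxeter_symm]) β hβ hk hj
      obtain ⟨x, hx⟩ := exists_reach _ (refl_mem _ hjm k)
      rw [ih _ (by lia) hv (hx.up k h1) rfl,
        ih _ (by lia) hv' (Reach.up j (e ▸ hx) h2) rfl, simple_comm hjk]
    · obtain ⟨h1, h2, e⟩ := hexagon j k hjk β hβ hj hk
      obtain ⟨h3, h4, -⟩ := hexagon k j (by rwa [coxeter_symm]) β hβ hk hj
      have hm1 := refl_mem _ hjm k
      have hm2 := refl_mem _ hkm j
      obtain ⟨x, hx⟩ := exists_reach _ (refl_mem _ hm1 j)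
      rw [ih _ (by lia) hv ((hx.up j h2).up k h1) rfl,
        ih _ (by lia) hv' ((Reach.up k (e ▸ hx) h4).up j h3) rfl, simple_braid hjk]

/-- A simple reflection fixing `β` can be moved past the element reached at `β`, where it becomes a
simple reflection in `J`. -/
theorem Reach.flat {w : W} {β : V} {j : Fin 6} (h : Reach w β) (hj : refl j β = β) :
    ∃ i ∈ J, s j * w = w * s i := by
  induction hn : depth β using Nat.strong_induction_on generalizing β w j with
  | _ n ih =>
    have hβ := h.mem
    rcases h.cases_down with ⟨rfl, rfl⟩ | ⟨k, v, rfl, hv, hk⟩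
    · exact ⟨j, mem_J_of_refl_θ j hj, by simp⟩
    have hkm := hv.mem
    rcases coxeter_cases j k with ⟨rfl, -⟩ | hjk | hjk
    · rw [hj] at hk; lia
    · obtain ⟨i, hi, e⟩ := ih _ (by lia) hv (flat_two j k hjk β hβ hj hk) rfl
      exact ⟨i, hi, by rw [simple_comm hjk, e, mul_assoc]⟩
    · obtain ⟨h1, h2⟩ := flat_three j k hjk β hβ hj hk
      obtain ⟨x, hx⟩ := exists_reach _ (refl_mem _ hkm j)
      obtain ⟨i, hi, e⟩ := ih _ (by lia) hx h2 rfl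
      refine ⟨i, hi, ?_⟩
      rw [hv.unique (hx.up j h1), simple_braid hjk, e]
      simp only [mul_assoc]

/-! ### The `J`-minimal elements are the reached ones -/

/-- Both `w` and `w sᵢ` carry `θ` to `β`, so the depth bound gives `ℓ(w) ≤ ℓ(w sᵢ)`; the two lengths
differ by parity. -/
theorem Reach.jMin {w : W} {β : V} (h : Reach w β) : JMin w := by
  intro i hi
  have h1 := depth_le_len (w * s i)
  rw [act_mul_simple, refl_θ i hi, h.act_eq, ← h.len_eq] at h1
  exact lt_of_le_of_ne h1 (E₆.toCoxeterSystem.length_mul_simple_ne w i).symm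

/-- Every `J`-minimal element is reached, by induction on the length, removing a left descent. -/
theorem JMin.reach {w : W} (h : JMin w) : Reach w (act w θ) := by
  induction hn : len w using Nat.strong_induction_on generalizing w with
  | _ n ih =>
    by_cases h1 : w = 1
    · subst h1; rw [act_one]; exact .base
    obtain ⟨j, hj⟩ := E₆.toCoxeterSystem.exists_leftDescent_of_ne_one h1
    rw [CoxeterSystem.isLeftDescent_iff] at hj
    obtain ⟨v, rfl⟩ : ∃ v, w = s j * v := ⟨s j * w, by simp⟩
    rw [CoxeterSystem.simple_mul_simple_cancel_left] at hj
    have hv : JMin v := by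
      intro i hi
      have h2 := h i hi
      have h3 := E₆.toCoxeterSystem.length_mul_le (s j) (v * s i)
      rw [E₆.toCoxeterSystem.length_simple, ← mul_assoc] at h3
      simp only [len] at *
      lia
    have hr := ih _ (by simp only [len] at *; lia) hv rfl
    rw [act_simple_mul]
    have hm := act_mem v
    rcases depth_refl _ hm j with hd | hd | hd
    · exact hr.step j hd
    -- If `sⱼ` lowers the depth, then `sⱼ v` is the element reached at the lower root.
    · obtain ⟨x, hx⟩ := exists_reach _ (refl_mem _ hm j)
      have e : s j * v = x := by
        rw [hr.unique (hx.up j hd), CoxeterSystem.simple_mul_simple_cancel_left]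
      rwa [e]
    -- If `sⱼ` fixes `v θ`, then `sⱼ v = v sᵢ` has the right descent `i ∈ J`, a contradiction.
    · obtain ⟨i, hi, e⟩ := hr.flat hd
      have h2 := h i hi
      rw [e] at h2
      simp only [len, CoxeterSystem.simple_mul_simple_cancel_right] at h2
      rw [← e] at h2
      simp only [len] at *
      lia

/-- The elements to be counted correspond to the roots of depth at most 12. -/
theorem bijOn : Set.BijOn (fun w => act w θ) {w : W | len w ≤ 12 ∧ JMin w}
    (roots.toFinset.filter (fun β => depth β ≤ 12) : Finset V) := by
  refine ⟨?_, ?_, ?_⟩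
  · rintro w ⟨h12, hw⟩
    simp only [Finset.coe_filter, List.mem_toFinset, Set.mem_ofPred_eq]
    exact ⟨act_mem w, (depth_le_len w).trans h12⟩
  · rintro w ⟨-, hw⟩ w' ⟨-, hw'⟩ (e : act w θ = act w' θ)
    exact hw.reach.unique (e ▸ hw'.reach)
  · intro β hβ
    simp only [Finset.coe_filter, List.mem_toFinset, Set.mem_ofPred_eq] at hβ
    obtain ⟨w, hw⟩ := exists_reach β hβ.1
    exact ⟨w, ⟨hw.len_eq ▸ hβ.2, hw.jMin⟩, hw.act_eq⟩

end E6Roots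


/-- In the Coxeter group of type E₆ (Mathlib/Bourbaki labelling: index `i : Fin 6`
corresponds to Bourbaki node `i+1`, so the branch node, Bourbaki node 2, is index 1),
the set of elements `w` with `ℓ(w) ≤ 12` and `ℓ(w sᵢ) > ℓ(w)` for all
`i ∈ {0,2,3,4,5}` (Bourbaki `{1,3,4,5,6}`) has exactly 47 elements, and the sum of
`3^ℓ(w)` over this set equals 4220491. -/
theorem stmt_12 :
    Nat.card {w : CoxeterMatrix.E₆.Group //
        CoxeterMatrix.E₆.toCoxeterSystem.length w ≤ 12 ∧
        ∀ i ∈ ({0, 2, 3, 4, 5} : Finset (Fin 6)),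
          CoxeterMatrix.E₆.toCoxeterSystem.length w <
            CoxeterMatrix.E₆.toCoxeterSystem.length
              (w * CoxeterMatrix.E₆.toCoxeterSystem.simple i)} = 47 ∧
    ∑ᶠ w ∈ {w : CoxeterMatrix.E₆.Group |
        CoxeterMatrix.E₆.toCoxeterSystem.length w ≤ 12 ∧
        ∀ i ∈ ({0, 2, 3, 4, 5} : Finset (Fin 6)),
          CoxeterMatrix.E₆.toCoxeterSystem.length w <
            CoxeterMatrix.E₆.toCoxeterSystem.length
              (w * CoxeterMatrix.E₆.toCoxeterSystem.simple i)},
      3 ^ CoxeterMatrix.E₆.toCoxeterSystem.length w = 4220491 := by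
  have hb := E6Roots.bijOn
  constructor
  · refine (Nat.card_congr hb.equiv).trans ?_
    rw [Nat.card_coe_set_eq, Set.ncard_coe_finset]
    exact E6Roots.card_roots
  · rw [← E6Roots.sum_roots, ← finsum_mem_coe_finset]
    refine finsum_mem_eq_of_bijOn _ hb fun w hw => ?_
    have hw' : E6Roots.JMin w := hw.2
    rw [← hw'.reach.len_eq]
end
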